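/- arXiv:1411.0742 — 6 statements merged into one kernel-verified Lean document; each statement's English description precedes it below -/
import Mathlib

section
/- Let 𝒜 be an abelian category, I a directed partial order, and F : I ⥤ 𝒜 a functor. Then the following are equivalent: (i) F satisfies the kernel-stabilization condition; (ii) there exist a directed partial order J and a functor G : J ⥤ 𝒜 all of whose transition morphisms G(j) → G(j′) (for j ≤ j′ in J) are monomorphisms, such that F and G present isomorphic ind-objects. -/
open CategoryTheory CategoryTheory.Limits

universe v u

/-- A functor `F : I ⥤ 𝒜` from a directed partial order to an abelian category satisfies the
*kernel-stabilization condition* if for every `i` there is some `j ≥ i` such that for every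
`l ≥ j` the kernel of the transition `F i ⟶ F l` coincides with the kernel of `F i ⟶ F j`
as a subobject of `F i`. -/
def KernelStabilization {𝒜 : Type u} [Category.{v} 𝒜] [Abelian 𝒜]
    {I : Type v} [PartialOrder I] (F : I ⥤ 𝒜) : Prop :=
  ∀ i : I, ∃ (j : I) (hij : i ≤ j), ∀ (l : I) (hjl : j ≤ l),
    kernelSubobject (F.map (homOfLE (hij.trans hjl))) =
      kernelSubobject (F.map (homOfLE hij))

/-- Two diagrams indexed by directed partial orders *present isomorphic ind-objects* if the
colimits of their compositions with the Yoneda embedding (in the presheaf category) are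
isomorphic. -/
def PresentIsoInd {𝒜 : Type u} [Category.{v} 𝒜]
    {I : Type v} [Preorder I] {J : Type v} [Preorder J]
    (F : I ⥤ 𝒜) (G : J ⥤ 𝒜) : Prop :=
  Nonempty (colimit (F ⋙ yoneda) ≅ colimit (G ⋙ yoneda))


namespace KS

section
variable {𝒜 : Type u} [Category.{v} 𝒜]

/-- The class of `f` in the colimit presheaf. -/
noncomputable def cls {I : Type v} [PartialOrder I] (F : I ⥤ 𝒜) {X : 𝒜} (i : I)
    (f : X ⟶ F.obj i) : (colimit (F ⋙ yoneda)).obj (Opposite.op X) :=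
  (colimit.ι (F ⋙ yoneda) i).app (Opposite.op X) f

lemma cls_surj {I : Type v} [PartialOrder I] (F : I ⥤ 𝒜) {X : 𝒜}
    (x : (colimit (F ⋙ yoneda)).obj (Opposite.op X)) :
    ∃ (i : I) (f : X ⟶ F.obj i), cls F i f = x := by
  have h := isColimitOfPreserves ((evaluation 𝒜ᵒᵖ (Type v)).obj (Opposite.op X))
    (colimit.isColimit (F ⋙ yoneda))
  obtain ⟨i, f, hf⟩ := Types.jointly_surjective _ h x
  exact ⟨i, f, hf⟩

lemma cls_eq {I : Type v} [PartialOrder I] [IsDirected I (· ≤ ·)] (F : I ⥤ 𝒜) {X : 𝒜}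
    {i j : I} (f : X ⟶ F.obj i) (g : X ⟶ F.obj j) (e : cls F i f = cls F j g) :
    ∃ (k : I) (hi : i ≤ k) (hj : j ≤ k),
      f ≫ F.map (homOfLE hi) = g ≫ F.map (homOfLE hj) := by
  have : Nonempty I := ⟨i⟩
  have h := isColimitOfPreserves ((evaluation 𝒜ᵒᵖ (Type v)).obj (Opposite.op X))
    (colimit.isColimit (F ⋙ yoneda))
  obtain ⟨k, a, b, hk⟩ := (Types.FilteredColimit.isColimit_eq_iff _ h).1 e
  exact ⟨k, leOfHom a, leOfHom b, hk⟩

lemma cls_map {I : Type v} [PartialOrder I] (F : I ⥤ 𝒜) {X : 𝒜}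
    {i j : I} (hij : i ≤ j) (f : X ⟶ F.obj i) :
    cls F j (f ≫ F.map (homOfLE hij)) = cls F i f := by
  have := congrArg (fun t => t.app (Opposite.op X)) (colimit.w (F ⋙ yoneda) (homOfLE hij))
  exact ConcreteCategory.congr_hom this f

lemma app_comp {I : Type v} [PartialOrder I] (F : I ⥤ 𝒜) {X Y : 𝒜} {i : I}
    (P : 𝒜ᵒᵖ ⥤ Type v) (e : colimit (F ⋙ yoneda) ⟶ P) (t : X ⟶ Y) (f : Y ⟶ F.obj i) :
    e.app (Opposite.op X) (cls F i (t ≫ f)) =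
      P.map t.op (e.app (Opposite.op Y) (cls F i f)) := by
  have := (colimit.ι (F ⋙ yoneda) i ≫ e).naturality t.op
  exact ConcreteCategory.congr_hom this f

lemma cls_comp {I : Type v} [PartialOrder I] (F : I ⥤ 𝒜) {X Y : 𝒜} {i : I}
    (t : X ⟶ Y) (f : Y ⟶ F.obj i) :
    cls F i (t ≫ f) = (colimit (F ⋙ yoneda)).map t.op (cls F i f) :=
  app_comp F _ (𝟙 _) t f

end

variable {𝒜 : Type u} [Category.{v} 𝒜] [Abelian 𝒜]

lemma stab_iff {A B C : 𝒜} (f : A ⟶ B) (g : B ⟶ C) (k : A ⟶ C) (hk : k = f ≫ g) :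
    kernelSubobject k = kernelSubobject f ↔
      ∀ (X : 𝒜) (t : X ⟶ A), t ≫ k = 0 → t ≫ f = 0 := by
  subst hk
  constructor
  · intro h X t ht
    rw [← kernelSubobject_factors_iff] at ht ⊢
    rwa [h] at ht
  · intro h
    apply le_antisymm
    · refine Subobject.le_of_comm (factorThruKernelSubobject f (kernelSubobject (f ≫ g)).arrow
        (h _ _ (kernelSubobject_arrow_comp _))) (by simp)
    · exact kernelSubobject_comp_le f g

theorem backward {I : Type v} [PartialOrder I] [IsDirected I (· ≤ ·)] (F : I ⥤ 𝒜)
    {J : Type v} [PartialOrder J] [IsDirected J (· ≤ ·)] (G : J ⥤ 𝒜)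
    (hG : ∀ (j j' : J) (h : j ≤ j'), Mono (G.map (homOfLE h)))
    (e : colimit (F ⋙ yoneda) ≅ colimit (G ⋙ yoneda)) : KernelStabilization F := by
  intro i
  obtain ⟨j, f, hf⟩ := cls_surj G (e.hom.app _ (cls F i (𝟙 _)))
  obtain ⟨k, g, hg⟩ := cls_surj F (e.inv.app _ (cls G j (𝟙 _)))
  have hf' : ∀ (X : 𝒜) (t : X ⟶ F.obj i), cls G j (t ≫ f) = e.hom.app _ (cls F i t) := by
    intro X t
    rw [cls_comp, hf, ← app_comp, Category.comp_id]
  have hg' : ∀ (X : 𝒜) (t : X ⟶ G.obj j), cls F k (t ≫ g) = e.inv.app _ (cls G j t) := by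
    intro X t
    rw [cls_comp, hg, ← app_comp, Category.comp_id]
  have hfg : cls F k (f ≫ g) = cls F i (𝟙 _) := by
    rw [hg', hf]
    have := congrArg (fun t => t.app (Opposite.op (F.obj i))) e.hom_inv_id
    exact ConcreteCategory.congr_hom this _
  obtain ⟨l, hkl, hil, hl⟩ := cls_eq F _ _ hfg
  rw [Category.id_comp] at hl
  refine ⟨l, hil, fun m hlm => ?_⟩
  have hm : F.map (homOfLE (hil.trans hlm)) =
      F.map (homOfLE hil) ≫ F.map (homOfLE hlm) := by
    rw [← F.map_comp]; rfl
  rw [stab_iff _ _ _ hm]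
  intro X t ht
  have h0 : cls F i t = cls F i 0 := by
    rw [← cls_map F (hil.trans hlm) t, ← cls_map F (hil.trans hlm) 0, ht, zero_comp]
  have h1 : cls G j (t ≫ f) = cls G j (0 ≫ f) := by rw [hf', hf', h0]
  obtain ⟨j', a, b, hj⟩ := cls_eq G _ _ h1
  have := hG j j' a
  have h2 : t ≫ f = 0 := by
    rw [← cancel_mono (G.map (homOfLE a)), hj]; simp
  rw [← hl, ← Category.assoc, ← Category.assoc, h2]; simp

lemma mono_of_epi {A B C : 𝒜} (q : A ⟶ B) [Epi q] (g : B ⟶ C)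
    (h : ∀ (X : 𝒜) (t : X ⟶ A), t ≫ q ≫ g = 0 → t ≫ q = 0) : Mono g := by
  refine Preadditive.mono_of_cancel_zero g fun {X} x hx => ?_
  have h1 : pullback.fst x q ≫ x = pullback.snd x q ≫ q := pullback.condition
  have h2 := h _ (pullback.snd x q) (by rw [← Category.assoc, ← h1, Category.assoc, hx, comp_zero])
  rw [← cancel_epi (pullback.fst x q), h1, h2, comp_zero]

theorem forward {I : Type v} [PartialOrder I] [IsDirected I (· ≤ ·)] (F : I ⥤ 𝒜)
    (hF : KernelStabilization F) : ∃ G : I ⥤ 𝒜,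
      (∀ (j j' : I) (h : j ≤ j'), Mono (G.map (homOfLE h))) ∧ PresentIsoInd F G := by
  choose s hs hst using hF
  have Fc : ∀ {a b c : I} (h : a ≤ b) (h' : b ≤ c),
      F.map (homOfLE h) ≫ F.map (homOfLE h') = F.map (homOfLE (h.trans h')) := by
    intro a b c h h'; rw [← F.map_comp]; rfl
  have key : ∀ (i l : I) (h : s i ≤ l) (X : 𝒜) (t : X ⟶ F.obj i),
      t ≫ F.map (homOfLE ((hs i).trans h)) = 0 → t ≫ F.map (homOfLE (hs i)) = 0 := by
    intro i l h
    exact (stab_iff _ _ _ (Fc (hs i) h).symm).1 (hst i l h)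
  let O : I → 𝒜 := fun i => Abelian.coimage (F.map (homOfLE (hs i)))
  let q : ∀ i, F.obj i ⟶ O i := fun i => Abelian.coimage.π _
  let m : ∀ i, O i ⟶ F.obj (s i) := fun i => Abelian.factorThruCoimage _
  have qm : ∀ i, q i ≫ m i = F.map (homOfLE (hs i)) := fun i => Abelian.coimage.fac _
  have hq : ∀ i, Epi (q i) := fun i => by dsimp only [q]; infer_instance
  have hm : ∀ i, Mono (m i) := fun i => by dsimp only [m]; infer_instance
  have ex : ∀ {i j : I} (h : i ≤ j), ∃ φ : O i ⟶ O j, q i ≫ φ = F.map (homOfLE h) ≫ q j := by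
    intro i j h
    refine ⟨cokernel.desc _ (F.map (homOfLE h) ≫ q j) ?_, cokernel.π_desc _ _ _⟩
    obtain ⟨l, hl, hl'⟩ := exists_ge_ge (s i) (s j)
    rw [← cancel_mono (m j), zero_comp, Category.assoc, Category.assoc, qm, ← Category.assoc]
    apply key j l hl'
    rw [Category.assoc, Fc, ← Fc (hs i) hl, kernel.condition_assoc, zero_comp]
  choose φ hφ using @ex
  have φm : ∀ {i j l : I} (h : i ≤ j) (hl : s i ≤ l) (hl' : s j ≤ l),
      φ h ≫ m j ≫ F.map (homOfLE hl') = m i ≫ F.map (homOfLE hl) := by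
    intro i j l h hl hl'
    rw [← cancel_epi (q i), ← Category.assoc, hφ, ← Category.assoc (q i), qm, Category.assoc,
      ← Category.assoc (q j), qm, Fc, Fc, Fc]
  let G : I ⥤ 𝒜 :=
    { obj := O
      map := fun f => φ (leOfHom f)
      map_id := fun i => by
        rw [← cancel_epi (q i), hφ, Category.comp_id]
        have : homOfLE (leOfHom (𝟙 i)) = 𝟙 i := rfl
        rw [this, F.map_id, Category.id_comp]
      map_comp := fun {a b c} f g => by
        rw [← cancel_epi (q a), hφ, ← Category.assoc, hφ, Category.assoc, hφ, ← Category.assoc,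
          Fc] }
  have Gm : ∀ {i j : I} (h : i ≤ j), G.map (homOfLE h) = φ h := fun h => rfl
  refine ⟨G, ?_, ?_⟩
  · intro i j h
    rw [Gm]
    obtain ⟨l, hl, hl'⟩ := exists_ge_ge (s i) (s j)
    have : Mono (m i ≫ F.map (homOfLE hl)) := by
      apply mono_of_epi (q i)
      intro X t ht
      rw [← Category.assoc (q i), qm, Fc] at ht
      rw [← cancel_mono (m i), Category.assoc, qm, zero_comp]
      exact key i l hl X t ht
    rw [← φm h hl hl'] at this
    exact mono_of_mono _ (m j ≫ F.map (homOfLE hl'))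
  · let α : F ⟶ G := { app := q, naturality := fun i j f => (hφ (leOfHom f)).symm }
    have wF : ∀ {i j : I} (h : i ≤ j),
        yoneda.map (F.map (homOfLE h)) ≫ colimit.ι (F ⋙ yoneda) j = colimit.ι (F ⋙ yoneda) i :=
      fun h => colimit.w (F ⋙ yoneda) (homOfLE h)
    have wG : ∀ {i j : I} (h : i ≤ j),
        yoneda.map (φ h) ≫ colimit.ι (G ⋙ yoneda) j = colimit.ι (G ⋙ yoneda) i :=
      fun h => colimit.w (G ⋙ yoneda) (homOfLE h)
    let c : Cocone (G ⋙ yoneda) :=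
      { pt := colimit (F ⋙ yoneda)
        ι := { app := fun i => yoneda.map (m i) ≫ colimit.ι (F ⋙ yoneda) (s i)
               naturality := fun i j f => by
                obtain ⟨l, hl, hl'⟩ := exists_ge_ge (s i) (s j)
                have : yoneda.map (φ (leOfHom f)) ≫ yoneda.map (m j) ≫
                    colimit.ι (F ⋙ yoneda) (s j) =
                    yoneda.map (m i) ≫ colimit.ι (F ⋙ yoneda) (s i) := by
                  rw [← wF hl, ← wF hl']
                  simp only [← Category.assoc, ← Functor.map_comp]
                  rw [Category.assoc, φm (leOfHom f) hl hl']
                exact this.trans (Category.comp_id _).symm } }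
    have mq : ∀ i, m i ≫ q (s i) = φ (hs i) := fun i => by
      rw [← cancel_epi (q i), ← Category.assoc, qm, hφ]
    have hα : ∀ i, colimit.ι (F ⋙ yoneda) i ≫ colimMap (Functor.whiskerRight α yoneda) =
        yoneda.map (q i) ≫ colimit.ι (G ⋙ yoneda) i := fun i => ι_colimMap _ _
    have hc : ∀ i, colimit.ι (G ⋙ yoneda) i ≫ colimit.desc _ c =
        yoneda.map (m i) ≫ colimit.ι (F ⋙ yoneda) (s i) := fun i => colimit.ι_desc _ _
    refine ⟨⟨colimMap (Functor.whiskerRight α yoneda), colimit.desc _ c, ?_, ?_⟩⟩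
    · apply colimit.hom_ext
      intro i
      rw [← Category.assoc, hα, Category.assoc, hc, ← Category.assoc, ← Functor.map_comp, qm, wF]
      exact (Category.comp_id _).symm
    · apply colimit.hom_ext
      intro i
      rw [← Category.assoc, hc, Category.assoc, hα, ← Category.assoc, ← Functor.map_comp, mq, wG]
      exact (Category.comp_id _).symm

end KS

/-- `F` satisfies the kernel-stabilization condition iff it presents an ind-object
isomorphic to one presented by a system with monomorphic transition morphisms. -/
theorem statement0 {𝒜 : Type u} [Category.{v} 𝒜] [Abelian 𝒜]
    {I : Type v} [PartialOrder I] [IsDirected I (· ≤ ·)] (F : I ⥤ 𝒜) :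
    KernelStabilization F ↔
      ∃ (J : Type v) (_ : PartialOrder J) (_ : IsDirected J (· ≤ ·)) (G : J ⥤ 𝒜),
        (∀ (j j' : J) (h : j ≤ j'), Mono (G.map (homOfLE h))) ∧ PresentIsoInd F G := by
  constructor
  · intro h
    obtain ⟨G, h1, h2⟩ := KS.forward F h
    exact ⟨I, inferInstance, inferInstance, G, h1, h2⟩
  · rintro ⟨J, _, _, G, h1, ⟨e⟩⟩
    exact KS.backward F G h1 e
end

section
/- Let 𝒜 be an abelian category and I a directed partial order. Let F′, F, F″ : I ⥤ 𝒜 be functors together with natural transformations α : F′ ⟶ F and β : F ⟶ F″ such that for every i ∈ I the sequence 0 → F′(i) → F(i) → F″(i) → 0 is a short exact sequence in 𝒜. If F′ and F″ satisfy the kernel-stabilization condition, then F satisfies the kernel-stabilization condition. -/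
open CategoryTheory CategoryTheory.Limits

universe v u

/-- Element-wise form of the kernel-stabilization equality. -/
lemma comp_eq_zero_of_kernelSubobject_eq {𝒜 : Type u} [Category.{v} 𝒜] [Abelian 𝒜]
    {X Y Z T : 𝒜} {f : X ⟶ Y} {g : X ⟶ Z} (h : kernelSubobject f = kernelSubobject g)
    (x : T ⟶ X) (hx : x ≫ f = 0) : x ≫ g = 0 := by
  have h1 : (kernelSubobject g).Factors x := h ▸ kernelSubobject_factors f x hx
  exact (kernelSubobject_factors_iff g x).1 h1

/-- if `0 ⟶ F′ ⟶ F ⟶ F″ ⟶ 0` is a short exact sequence of `I`-indexed systems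
(objectwise short exact) and `F′`, `F″` satisfy the kernel-stabilization condition, then so
does `F`. -/
theorem statement1 {𝒜 : Type u} [Category.{v} 𝒜] [Abelian 𝒜]
    {I : Type v} [PartialOrder I] [IsDirected I (· ≤ ·)]
    (F' F F'' : I ⥤ 𝒜) (α : F' ⟶ F) (β : F ⟶ F'')
    (hw : ∀ i : I, α.app i ≫ β.app i = 0)
    (hse : ∀ i : I, (ShortComplex.mk (α.app i) (β.app i) (hw i)).ShortExact)
    (h' : KernelStabilization F') (h'' : KernelStabilization F'') :
    KernelStabilization F := by
  intro i
  obtain ⟨j, hij, hj⟩ := h'' i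
  obtain ⟨k, hjk, hk⟩ := h' j
  refine ⟨k, hij.trans hjk, fun l hkl => ?_⟩
  have hil : F.map (homOfLE ((hij.trans hjk).trans hkl)) =
      F.map (homOfLE (hij.trans hjk)) ≫ F.map (homOfLE hkl) := F.map_comp _ _
  have hik : F.map (homOfLE (hij.trans hjk)) = F.map (homOfLE hij) ≫ F.map (homOfLE hjk) :=
    F.map_comp _ _
  apply le_antisymm
  · apply le_kernelSubobject
    set x := (kernelSubobject (F.map (homOfLE ((hij.trans hjk).trans hkl)))).arrow with hxdef
    have hx : x ≫ F.map (homOfLE ((hij.trans hjk).trans hkl)) = 0 :=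
      kernelSubobject_arrow_comp _
    have h1 : (x ≫ β.app i) ≫ F''.map (homOfLE hij) = 0 := by
      apply comp_eq_zero_of_kernelSubobject_eq (hj l (hjk.trans hkl))
      rw [Category.assoc, ← β.naturality, ← Category.assoc]
      exact (congrArg (· ≫ β.app l) hx).trans zero_comp
    have h2 : (x ≫ F.map (homOfLE hij)) ≫ β.app j = 0 := by
      rw [Category.assoc, β.naturality, ← Category.assoc, h1]
    have := (hse j).mono_f
    have := (hse l).mono_f
    obtain ⟨y, hy⟩ : ∃ y, y ≫ α.app j = x ≫ F.map (homOfLE hij) :=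
      ⟨(hse j).exact.lift _ h2, (hse j).exact.lift_f _ h2⟩
    have h3 : y ≫ F'.map (homOfLE hjk) = 0 := by
      apply comp_eq_zero_of_kernelSubobject_eq (hk l hkl)
      rw [← cancel_mono (α.app l), Category.assoc, α.naturality, ← Category.assoc, hy,
        Category.assoc, ← F.map_comp, zero_comp]
      exact hx
    rw [hik, ← Category.assoc, ← hy, Category.assoc, ← α.naturality,
      ← Category.assoc, h3, zero_comp]
  · apply le_kernelSubobject
    rw [hil, ← Category.assoc, kernelSubobject_arrow_comp, zero_comp]
end

section
/- Let 𝒜 be an abelian category, I a directed partial order, and F : Iᵒᵖ ⥤ 𝒜 an inverse system. Then the following are equivalent: (i) F satisfies the image-stabilization condition; (ii) there exist a directed partial order J and an inverse system G : Jᵒᵖ ⥤ 𝒜 all of whose transition morphisms G(j′) → G(j) (for j ≤ j′ in J) are epimorphisms, such that F and G present isomorphic pro-objects. -/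
open CategoryTheory CategoryTheory.Limits Opposite

universe v u

/-- An inverse system `F : Iᵒᵖ ⥤ 𝒜` indexed by a directed partial order, with values in an
abelian category, satisfies the *image-stabilization condition* if for every `i` there is some
`j ≥ i` such that for every `l ≥ j` the image of the transition `F l ⟶ F i` coincides with the
image of `F j ⟶ F i` as a subobject of `F i`. -/
def ImageStabilization {𝒜 : Type u} [Category.{v} 𝒜] [Abelian 𝒜]
    {I : Type v} [PartialOrder I] (F : Iᵒᵖ ⥤ 𝒜) : Prop :=
  ∀ i : I, ∃ (j : I) (hij : i ≤ j), ∀ (l : I) (hjl : j ≤ l),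
    imageSubobject (F.map (homOfLE (hij.trans hjl)).op) =
      imageSubobject (F.map (homOfLE hij).op)

/-- Two inverse systems `F : Iᵒᵖ ⥤ 𝒜` and `G : Jᵒᵖ ⥤ 𝒜` *present isomorphic pro-objects* if
the corresponding diagrams `I ⥤ 𝒜ᵒᵖ` and `J ⥤ 𝒜ᵒᵖ` present isomorphic ind-objects over
`𝒜ᵒᵖ`. -/
def PresentIsoPro {𝒜 : Type u} [Category.{v} 𝒜]
    {I : Type v} [Preorder I] {J : Type v} [Preorder J]
    (F : Iᵒᵖ ⥤ 𝒜) (G : Jᵒᵖ ⥤ 𝒜) : Prop :=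
  PresentIsoInd F.rightOp G.rightOp

/-- The morphism out of a representable determined by a map from a stage of the system. -/
noncomputable def proCls {𝒜 : Type u} [Category.{v} 𝒜] {J : Type v} [Preorder J]
    (P : Jᵒᵖ ⥤ 𝒜) {j : J} {X : 𝒜} (b : P.obj (op j) ⟶ X) :
    yoneda.obj (op X) ⟶ colimit (P.rightOp ⋙ yoneda) :=
  yoneda.map b.op ≫ colimit.ι (P.rightOp ⋙ yoneda) j

theorem proCls_comp {𝒜 : Type u} [Category.{v} 𝒜] {J : Type v} [Preorder J]
    (P : Jᵒᵖ ⥤ 𝒜) {j : J} {X Y : 𝒜} (b : P.obj (op j) ⟶ X) (f : X ⟶ Y) :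
    proCls P (b ≫ f) = yoneda.map f.op ≫ proCls P b := by
  simp [proCls]

theorem proCls_map {𝒜 : Type u} [Category.{v} 𝒜] {J : Type v} [Preorder J]
    (P : Jᵒᵖ ⥤ 𝒜) {j k : J} (h : j ≤ k) {X : 𝒜} (b : P.obj (op j) ⟶ X) :
    proCls P (P.map (homOfLE h).op ≫ b) = proCls P b := by
  have := colimit.w (P.rightOp ⋙ yoneda) (homOfLE h)
  simp only [Functor.comp_map, Functor.rightOp_map] at this
  rw [proCls, proCls, op_comp, Functor.map_comp, Category.assoc]
  exact congrArg (fun t => yoneda.map b.op ≫ t) this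

theorem proCls_exists {𝒜 : Type u} [Category.{v} 𝒜] {J : Type v} [Preorder J]
    (P : Jᵒᵖ ⥤ 𝒜) {X : 𝒜} (x : yoneda.obj (op X) ⟶ colimit (P.rightOp ⋙ yoneda)) :
    ∃ (j : J) (b : P.obj (op j) ⟶ X), proCls P b = x := by
  obtain ⟨j, y, hy⟩ := Types.jointly_surjective_of_isColimit
    (isColimitOfPreserves ((evaluation _ _).obj (op (op X)))
      (colimit.isColimit (P.rightOp ⋙ yoneda))) (yonedaEquiv x)
  refine ⟨j, Quiver.Hom.unop y, ?_⟩
  apply yonedaEquiv.injective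
  rw [← hy, proCls, yonedaEquiv_comp, yonedaEquiv_yoneda_map]
  rfl

theorem proCls_eq {𝒜 : Type u} [Category.{v} 𝒜] {J : Type v} [Preorder J]
    [IsDirected J (· ≤ ·)] (P : Jᵒᵖ ⥤ 𝒜) {X : 𝒜} {j k : J} (b : P.obj (op j) ⟶ X)
    (c : P.obj (op k) ⟶ X) (h : proCls P b = proCls P c) :
    ∃ (m : J) (hj : j ≤ m) (hk : k ≤ m),
      P.map (homOfLE hj).op ≫ b = P.map (homOfLE hk).op ≫ c := by
  have : Nonempty J := ⟨j⟩
  have h' := congrArg yonedaEquiv h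
  rw [proCls, proCls, yonedaEquiv_comp, yonedaEquiv_comp, yonedaEquiv_yoneda_map,
    yonedaEquiv_yoneda_map] at h'
  obtain ⟨m, f, g, e⟩ := (Types.FilteredColimit.isColimit_eq_iff _
    (isColimitOfPreserves ((evaluation _ _).obj (op (op X)))
      (colimit.isColimit (P.rightOp ⋙ yoneda)))).1 h'
  exact ⟨m, leOfHom f, leOfHom g, congrArg Quiver.Hom.unop e⟩

theorem imageSubobject_epi_comp_eq {𝒜 : Type u} [Category.{v} 𝒜] [Abelian 𝒜] {X Y Z : 𝒜}
    (f : X ⟶ Y) [Epi f] (g : Y ⟶ Z) : imageSubobject (f ≫ g) = imageSubobject g := by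
  refine le_antisymm (imageSubobject_comp_le f g) ?_
  have : IsIso (Subobject.ofLE _ _ (imageSubobject_comp_le f g)) :=
    isIso_of_mono_of_epi _
  exact Subobject.le_of_comm (inv (Subobject.ofLE _ _ (imageSubobject_comp_le f g))) (by simp)

theorem stab_of_pro {𝒜 : Type u} [Category.{v} 𝒜] [Abelian 𝒜]
    {I : Type v} [PartialOrder I] [IsDirected I (· ≤ ·)] (F : Iᵒᵖ ⥤ 𝒜)
    {J : Type v} [PartialOrder J] [IsDirected J (· ≤ ·)] (G : Jᵒᵖ ⥤ 𝒜)
    (hG : ∀ (j j' : J) (h : j ≤ j'), Epi (G.map (homOfLE h).op))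
    (e : colimit (F.rightOp ⋙ yoneda) ≅ colimit (G.rightOp ⋙ yoneda)) :
    ImageStabilization F := by
  intro i
  have hb : ∀ i : I, ∃ (j : J) (b : G.obj (op j) ⟶ F.obj (op i)),
      proCls G b = proCls F (𝟙 (F.obj (op i))) ≫ e.hom := fun i => proCls_exists G _
  obtain ⟨j, b, hbj⟩ := hb i
  obtain ⟨k, a, ha⟩ := proCls_exists F (proCls G (𝟙 (G.obj (op j))) ≫ e.inv)
  have h1 : proCls F (a ≫ b) = proCls F (𝟙 (F.obj (op i))) := by
    rw [proCls_comp, ha, ← Category.assoc, ← proCls_comp, Category.id_comp, hbj]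
    simp
  obtain ⟨l, hkl, hil, hl⟩ := proCls_eq F _ _ h1
  have hle : imageSubobject (F.map (homOfLE hil).op) ≤ imageSubobject b := by
    rw [Category.comp_id] at hl
    rw [← hl, ← Category.assoc]
    exact imageSubobject_comp_le _ _
  have hge : ∀ (l' : I) (h : i ≤ l'),
      imageSubobject b ≤ imageSubobject (F.map (homOfLE h).op) := by
    intro l' h
    obtain ⟨j', b', hb'⟩ := hb l'
    have h2 : proCls G (b' ≫ F.map (homOfLE h).op) = proCls G b := by
      rw [proCls_comp, hb', ← Category.assoc, ← proCls_comp, hbj, Category.id_comp]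
      rw [← proCls_map F h (𝟙 _), Category.comp_id]
    obtain ⟨m, h3, h4, h5⟩ := proCls_eq G _ _ h2
    have := hG _ _ h4
    rw [← imageSubobject_epi_comp_eq (G.map (homOfLE h4).op) b, ← h5, ← Category.assoc]
    exact imageSubobject_comp_le _ _
  refine ⟨l, hil, fun l' hl' => le_antisymm ?_ ?_⟩
  · have : F.map (homOfLE (hil.trans hl')).op
        = F.map (homOfLE hl').op ≫ F.map (homOfLE hil).op := by
      rw [← Functor.map_comp]; rfl
    have h6 := imageSubobject_comp_le (F.map (homOfLE hl').op) (F.map (homOfLE hil).op)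
    simp only [← this] at h6
    exact h6
  · exact hle.trans (hge _ _)

theorem pro_of_stab {𝒜 : Type u} [Category.{v} 𝒜] [Abelian 𝒜]
    {I : Type v} [PartialOrder I] [IsDirected I (· ≤ ·)] (F : Iᵒᵖ ⥤ 𝒜)
    (hF : ImageStabilization F) :
    ∃ G : Iᵒᵖ ⥤ 𝒜, (∀ (j j' : I) (h : j ≤ j'), Epi (G.map (homOfLE h).op)) ∧
      PresentIsoPro F G := by
  choose s hs hst using hF
  let S : ∀ i : I, Subobject (F.obj (op i)) := fun i => imageSubobject (F.map (homOfLE (hs i)).op)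
  have hS : ∀ (i l : I) (h : s i ≤ l),
    imageSubobject (F.map (homOfLE ((hs i).trans h)).op) = S i := fun i l h => hst i l h
  have hcomp : ∀ {i j k : I} (h : i ≤ j) (h' : j ≤ k),
      F.map (homOfLE h').op ≫ F.map (homOfLE h).op = F.map (homOfLE (h.trans h')).op := by
    intro i j k h h'
    rw [← Functor.map_comp]; rfl
  -- surjections from far enough stages
  have hq : ∀ (i l : I) (h : s i ≤ l), ∃ q : F.obj (op l) ⟶ (S i : 𝒜),
      Epi q ∧ q ≫ (S i).arrow = F.map (homOfLE ((hs i).trans h)).op := by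
    intro i l h
    rw [← hS i l h]
    exact ⟨factorThruImageSubobject _, inferInstance, imageSubobject_arrow_comp _⟩
  have ht : ∀ (i i' : I) (h : i ≤ i'), ∃ t : (S i' : 𝒜) ⟶ (S i : 𝒜),
      Epi t ∧ t ≫ (S i).arrow = (S i').arrow ≫ F.map (homOfLE h).op := by
    intro i i' h
    obtain ⟨l, h1, h2⟩ := directed_of (· ≤ ·) (s i) (s i')
    obtain ⟨q, hqe, hq1⟩ := hq i l h1
    obtain ⟨q', hqe', hq1'⟩ := hq i' l h2
    have hsq : q ≫ (S i).arrow = q' ≫ (S i').arrow ≫ F.map (homOfLE h).op := by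
      rw [hq1, ← Category.assoc, hq1', hcomp]
    have := strongEpi_of_epi q'
    have sq : CommSq q q' (S i).arrow ((S i').arrow ≫ F.map (homOfLE h).op) := ⟨hsq⟩
    refine ⟨sq.lift, ?_, sq.fac_right⟩
    have : Epi (q' ≫ sq.lift) := by rw [sq.fac_left]; exact hqe
    exact epi_of_epi q' sq.lift
  choose t hte htc using ht
  let G : Iᵒᵖ ⥤ 𝒜 :=
    { obj := fun i => (S i.unop : 𝒜)
      map := fun {i i'} f => t i'.unop i.unop (leOfHom f.unop)
      map_id := fun i => by
        rw [← cancel_mono (S i.unop).arrow, htc]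
        have : (homOfLE (leOfHom (𝟙 i : i ⟶ i).unop)).op = 𝟙 i := rfl
        rw [this]
        simp
      map_comp := fun {i j k} f g => by
        rw [← cancel_mono (S k.unop).arrow, htc, Category.assoc, htc, ← Category.assoc, htc,
          Category.assoc, hcomp] }
  refine ⟨G, fun j j' h => hte j j' h, ?_⟩
  have hr := fun i => hq i (s i) le_rfl
  choose r _ hr using hr
  let ι : ∀ i : I, G.obj (op i) ⟶ F.obj (op i) := fun i => (S i).arrow
  have : ∀ i, Mono (ι i) := fun i => inferInstanceAs (Mono (S i).arrow)
  have hι : ∀ (i i' : I) (h : i ≤ i'),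
      G.map (homOfLE h).op ≫ ι i = ι i' ≫ F.map (homOfLE h).op := fun i i' h => htc i i' h
  let r' : ∀ i : I, F.obj (op (s i)) ⟶ G.obj (op i) := r
  have hr' : ∀ i, r' i ≫ ι i = F.map (homOfLE (hs i)).op := hr
  let cF : Cocone (F.rightOp ⋙ yoneda) :=
    { pt := colimit (G.rightOp ⋙ yoneda)
      ι :=
        { app := fun i => proCls G (ι i)
          naturality := fun i i' f => by
            change yoneda.map (F.map f.op).op ≫ proCls G (ι i') = proCls G (ι i) ≫ 𝟙 _
            rw [← proCls_comp, Category.comp_id]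
            have h := hι i i' (leOfHom f)
            have e : f = homOfLE (leOfHom f) := rfl
            rw [e, ← h, proCls_map] } }
  let cG : Cocone (G.rightOp ⋙ yoneda) :=
    { pt := colimit (F.rightOp ⋙ yoneda)
      ι :=
        { app := fun i => proCls F (r' i)
          naturality := fun i i' f => by
            change yoneda.map (G.map f.op).op ≫ proCls F (r' i') = proCls F (r' i) ≫ 𝟙 _
            rw [← proCls_comp, Category.comp_id]
            have e : f = homOfLE (leOfHom f) := rfl
            rw [e]
            obtain ⟨l, h1, h2⟩ := directed_of (· ≤ ·) (s i) (s i')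
            rw [← proCls_map F h2, ← proCls_map F h1 (r' i)]
            congr 1
            rw [← cancel_mono (ι i)]
            simp only [Category.assoc]
            rw [hι, hr', ← Category.assoc (r' i'), hr', hcomp, hcomp, hcomp] } }
  have hF1 : ∀ (i : I), colimit.ι (F.rightOp ⋙ yoneda) i ≫
      colimit.desc (F.rightOp ⋙ yoneda) cF = proCls G (ι i) := fun i => colimit.ι_desc cF i
  have hG1 : ∀ (i : I), colimit.ι (G.rightOp ⋙ yoneda) i ≫
      colimit.desc (G.rightOp ⋙ yoneda) cG = proCls F (r' i) := fun i => colimit.ι_desc cG i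
  have hF2 : ∀ {i : I} {X : 𝒜} (b : F.obj (op i) ⟶ X),
      proCls F b ≫ colimit.desc (F.rightOp ⋙ yoneda) cF = proCls G (ι i ≫ b) := by
    intro i X b
    rw [proCls_comp, ← hF1, proCls, Category.assoc]
  have hG2 : ∀ {i : I} {X : 𝒜} (b : G.obj (op i) ⟶ X),
      proCls G b ≫ colimit.desc (G.rightOp ⋙ yoneda) cG = proCls F (r' i ≫ b) := by
    intro i X b
    rw [proCls_comp, ← hG1, proCls, Category.assoc]
  have hid : ∀ (P : Iᵒᵖ ⥤ 𝒜) (i : I),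
      colimit.ι (P.rightOp ⋙ yoneda) i = proCls P (𝟙 (P.obj (op i))) := by
    intro P i
    rw [proCls, op_id, CategoryTheory.Functor.map_id]
    exact (Category.id_comp _).symm
  refine ⟨⟨colimit.desc _ cF, colimit.desc _ cG, ?_, ?_⟩⟩
  · refine colimit.hom_ext fun i => ?_
    rw [← Category.assoc, hF1, hG2, hr', Category.comp_id, hid,
      ← proCls_map F (hs i) (𝟙 _), Category.comp_id]
  · refine colimit.hom_ext fun i => ?_
    rw [← Category.assoc, hG1, hF2, Category.comp_id, hid,
      ← proCls_map G (hs i) (𝟙 _), Category.comp_id]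
    congr 1
    rw [← cancel_mono (ι i), hι, Category.assoc, hr']

/-- an inverse system `F` satisfies the image-stabilization condition iff it
presents a pro-object isomorphic to one presented by an inverse system with epimorphic
transition morphisms. -/
theorem statement2 {𝒜 : Type u} [Category.{v} 𝒜] [Abelian 𝒜]
    {I : Type v} [PartialOrder I] [IsDirected I (· ≤ ·)] (F : Iᵒᵖ ⥤ 𝒜) :
    ImageStabilization F ↔
      ∃ (J : Type v) (_ : PartialOrder J) (_ : IsDirected J (· ≤ ·)) (G : Jᵒᵖ ⥤ 𝒜),
        (∀ (j j' : J) (h : j ≤ j'), Epi (G.map (homOfLE h).op)) ∧ PresentIsoPro F G := by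
  constructor
  · intro h
    obtain ⟨G, hG, hp⟩ := pro_of_stab F h
    exact ⟨I, inferInstance, inferInstance, G, hG, hp⟩
  · rintro ⟨J, _, _, G, hG, ⟨e⟩⟩
    exact stab_of_pro F G hG e
end

section
/- Let 𝒜 be an abelian category and I a directed partial order. Let F′, F, F″ : Iᵒᵖ ⥤ 𝒜 be inverse systems together with natural transformations α : F′ ⟶ F and β : F ⟶ F″ such that for every i ∈ I the sequence 0 → F′(i) → F(i) → F″(i) → 0 is a short exact sequence in 𝒜. If F′ and F″ satisfy the image-stabilization condition, then F satisfies the image-stabilization condition. -/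
open CategoryTheory CategoryTheory.Limits Opposite

universe v u

/-- Comparison of images up to refinements: if the image of `f` is contained in that of `g`,
any generalized element in the image of `f` lifts along `g` after an epimorphism. -/
lemma lift_of_imageSubobject_le {𝒜 : Type u} [Category.{v} 𝒜] [Abelian 𝒜] {X Y Z : 𝒜}
    (f : X ⟶ Z) (g : Y ⟶ Z) (h : imageSubobject f ≤ imageSubobject g) {A : 𝒜} (a : A ⟶ X) :
    ∃ (A' : 𝒜) (π : A' ⟶ A) (_ : Epi π) (y : A' ⟶ Y), π ≫ a ≫ f = y ≫ g := by
  obtain ⟨A', π, hπ, y, hy⟩ := surjective_up_to_refinements_of_epi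
    (factorThruImageSubobject g)
    (a ≫ factorThruImageSubobject f ≫ Subobject.ofLE _ _ h)
  refine ⟨A', π, hπ, y, ?_⟩
  have := congrArg (fun t => t ≫ (imageSubobject g).arrow) hy
  simpa using this

lemma imageSubobject_le_of_lift {𝒜 : Type u} [Category.{v} 𝒜] [Abelian 𝒜] {X Y Z A : 𝒜}
    (f : X ⟶ Z) (g : Y ⟶ Z) (π : A ⟶ X) [Epi π] (y : A ⟶ Y) (h : π ≫ f = y ≫ g) :
    imageSubobject f ≤ imageSubobject g := by
  have sq : CommSq (y ≫ factorThruImageSubobject g) π (imageSubobject g).arrow f :=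
    ⟨by simp [h]⟩
  have := strongEpi_of_epi π
  exact imageSubobject_le f sq.lift sq.fac_right

/-- if `0 ⟶ F′ ⟶ F ⟶ F″ ⟶ 0` is a short exact sequence of inverse systems
(objectwise short exact) and `F′`, `F″` satisfy the image-stabilization condition, then so
does `F`. -/
theorem statement3 {𝒜 : Type u} [Category.{v} 𝒜] [Abelian 𝒜]
    {I : Type v} [PartialOrder I] [IsDirected I (· ≤ ·)]
    (F' F F'' : Iᵒᵖ ⥤ 𝒜) (α : F' ⟶ F) (β : F ⟶ F'')
    (hw : ∀ i : I, α.app (op i) ≫ β.app (op i) = 0)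
    (hse : ∀ i : I, (ShortComplex.mk (α.app (op i)) (β.app (op i)) (hw i)).ShortExact)
    (h' : ImageStabilization F') (h'' : ImageStabilization F'') :
    ImageStabilization F := by
  intro i
  obtain ⟨j, hij, hj⟩ := h' i
  obtain ⟨k, hjk, hk⟩ := h'' j
  refine ⟨k, hij.trans hjk, fun l hkl => le_antisymm ?_ ?_⟩
  · refine imageSubobject_le_of_lift _ _ (𝟙 _) (F.map (homOfLE hkl).op) ?_
    rw [← F.map_comp, Category.id_comp]
    rfl
  · obtain ⟨A₁, π₁, _, c, hc⟩ := lift_of_imageSubobject_le _ _ (hk l hkl).ge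
      (β.app (op k))
    have := (hse l).epi_g
    obtain ⟨A₂, π₂, _, b, hb⟩ := surjective_up_to_refinements_of_epi (β.app (op l)) c
    have hz : (π₂ ≫ π₁ ≫ F.map (homOfLE hjk).op - b ≫ F.map (homOfLE (hjk.trans hkl)).op) ≫
        β.app (op j) = 0 := by
      rw [Preadditive.sub_comp, sub_eq_zero]
      simp only [Category.assoc, NatTrans.naturality]
      rw [hc, ← Category.assoc, hb, Category.assoc]
    obtain ⟨A₃, π₃, _, a, ha⟩ := (hse j).exact.exact_up_to_refinements _ hz
    obtain ⟨A₄, π₄, _, a', ha'⟩ := lift_of_imageSubobject_le _ _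
      (hj l (hjk.trans hkl)).ge a
    dsimp at a a' ha ha'
    refine imageSubobject_le_of_lift _ _ (π₄ ≫ π₃ ≫ π₂ ≫ π₁)
      (π₄ ≫ π₃ ≫ b + a' ≫ α.app (op l)) ?_
    have e1 : F.map (homOfLE (hij.trans hjk)).op =
        F.map (homOfLE hjk).op ≫ F.map (homOfLE hij).op := by
      rw [← F.map_comp]; rfl
    have e2 : F.map (homOfLE ((hij.trans hjk).trans hkl)).op =
        F.map (homOfLE (hjk.trans hkl)).op ≫ F.map (homOfLE hij).op := by
      rw [← F.map_comp]; rfl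
    have h1 := congrArg (fun t => π₄ ≫ t ≫ F.map (homOfLE hij).op) ha
    have h2 := congrArg (fun t => t ≫ α.app (op i)) ha'
    simp only [Category.assoc, Preadditive.sub_comp, Preadditive.comp_sub,
      ← NatTrans.naturality] at h1 h2
    simp only [Category.assoc, Preadditive.add_comp, ← NatTrans.naturality]
    rw [← h2, ← h1, e1, e2]
    abel
end

section
/- Let 𝒜 be an abelian category, W an injective object of 𝒜, and I a countable directed partial order. Let F′, F, F″ : I ⥤ 𝒜 be functors together with natural transformations α : F′ ⟶ F and β : F ⟶ F″ such that for every i ∈ I the sequence 0 → F′(i) → F(i) → F″(i) → 0 is a short exact sequence in 𝒜, and assume that all transition morphisms F″(i) → F″(j) (for i ≤ j) are monomorphisms. Then the induced sequence of inverse limits of abelian groups 0 → lim_i Hom(F″(i), W) → lim_i Hom(F(i), W) → lim_i Hom(F′(i), W) → 0 is exact, where the limits are taken over Iᵒᵖ with transition maps given by precomposition with the transition morphisms, and the maps of the sequence are induced by composition with β and α. -/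
open CategoryTheory CategoryTheory.Limits

universe v u

/-- The inverse limit `lim_i Hom(F i, W)`, realized as the additive subgroup of compatible
families in `∏ i, (F.obj i ⟶ W)`, the transition maps being precomposition with the transition
morphisms of `F`. -/
def compatFamilies {𝒜 : Type u} [Category.{v} 𝒜] [Preadditive 𝒜] {I : Type v} [Preorder I]
    (F : I ⥤ 𝒜) (W : 𝒜) : AddSubgroup ((i : I) → (F.obj i ⟶ W)) where
  carrier := {x | ∀ (i j : I) (h : i ≤ j), F.map (homOfLE h) ≫ x j = x i}
  zero_mem' := by intro i j h; simp
  add_mem' := by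
    intro a b ha hb i j h
    simp only [Pi.add_apply, Preadditive.comp_add, ha i j h, hb i j h]
  neg_mem' := by
    intro a ha i j h
    simp only [Pi.neg_apply, Preadditive.comp_neg, ha i j h]

/-- The map `lim_i Hom(G i, W) → lim_i Hom(F i, W)` induced by a natural transformation
`τ : F ⟶ G`, given by composition with `τ`. -/
def limHomMap {𝒜 : Type u} [Category.{v} 𝒜] [Preadditive 𝒜] {I : Type v} [Preorder I]
    {F G : I ⥤ 𝒜} (τ : F ⟶ G) (W : 𝒜) :
    compatFamilies G W →+ compatFamilies F W where
  toFun x := ⟨fun i => τ.app i ≫ x.1 i, fun i j h => by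
    rw [← Category.assoc, τ.naturality, Category.assoc, x.2 i j h]⟩
  map_zero' := by
    apply Subtype.ext
    funext i
    simp
  map_add' a b := by
    apply Subtype.ext
    funext i
    simp [Preadditive.comp_add]

/-- One step of the lifting: extend a lift at `i` to a lift at `j`. -/
theorem step_lift {𝒜 : Type u} [Category.{v} 𝒜] [Abelian 𝒜]
    (W : 𝒜) [Injective W]
    {I : Type v} [PartialOrder I]
    (F' F F'' : I ⥤ 𝒜) (α : F' ⟶ F) (β : F ⟶ F'')
    (hw : ∀ i : I, α.app i ≫ β.app i = 0)
    (hse : ∀ i : I, (ShortComplex.mk (α.app i) (β.app i) (hw i)).ShortExact)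
    (hmono : ∀ (i j : I) (h : i ≤ j), Mono (F''.map (homOfLE h)))
    (y : compatFamilies F' W) (i j : I) (h : i ≤ j) (x : F.obj i ⟶ W)
    (hx : α.app i ≫ x = y.1 i) :
    ∃ x' : F.obj j ⟶ W, α.app j ≫ x' = y.1 j ∧ F.map (homOfLE h) ≫ x' = x := by
  have : Mono (α.app j) := (hse j).mono_f
  have : Epi (β.app i) := (hse i).epi_g
  have := hmono i j h
  let z : F.obj j ⟶ W := Injective.factorThru (y.1 j) (α.app j)
  have hz : α.app j ≫ z = y.1 j := Injective.comp_factorThru _ _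
  have h0 : α.app i ≫ (F.map (homOfLE h) ≫ z - x) = 0 := by
    rw [Preadditive.comp_sub, ← Category.assoc, ← α.naturality, Category.assoc, hz, y.2 i j h,
      hx, sub_self]
  have : Epi (ShortComplex.mk (α.app i) (β.app i) (hw i)).g := (hse i).epi_g
  let w : F''.obj i ⟶ W := (hse i).exact.desc _ h0
  have hwd : β.app i ≫ w = F.map (homOfLE h) ≫ z - x := (hse i).exact.g_desc _ h0
  let w' : F''.obj j ⟶ W := Injective.factorThru w (F''.map (homOfLE h))
  have hw' : F''.map (homOfLE h) ≫ w' = w := Injective.comp_factorThru _ _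
  refine ⟨z - β.app j ≫ w', ?_, ?_⟩
  · rw [Preadditive.comp_sub, hz, ← Category.assoc, hw j, zero_comp, sub_zero]
  · rw [Preadditive.comp_sub, ← Category.assoc _ (β.app j), β.naturality, Category.assoc, hw',
      hwd, sub_sub_cancel]

theorem exists_cofinal_seq {I : Type v} [PartialOrder I] [IsDirected I (· ≤ ·)] [Countable I]
    [Nonempty I] : ∃ s : ℕ → I, Monotone s ∧ ∀ i, ∃ n, i ≤ s n := by
  have := Encodable.ofCountable I
  have : Inhabited I := Classical.inhabited_of_nonempty inferInstance
  have hd : Directed (· ≤ ·) (id : I → I) := fun a b => by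
    obtain ⟨c, h1, h2⟩ := exists_ge_ge a b
    exact ⟨c, h1, h2⟩
  exact ⟨hd.sequence id, hd.sequence_mono, fun i => ⟨_, hd.le_sequence i⟩⟩

/-- for an injective object `W` of an abelian category, a countable directed
partial order `I`, and an objectwise short exact sequence `0 ⟶ F′ ⟶ F ⟶ F″ ⟶ 0` of
`I`-indexed systems whose third term `F″` has monomorphic transition morphisms, the induced
sequence of inverse limits
`0 → lim Hom(F″ i, W) → lim Hom(F i, W) → lim Hom(F′ i, W) → 0` is exact. -/
theorem statement9 {𝒜 : Type u} [Category.{v} 𝒜] [Abelian 𝒜]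
    (W : 𝒜) [Injective W]
    {I : Type v} [PartialOrder I] [IsDirected I (· ≤ ·)] [Countable I]
    (F' F F'' : I ⥤ 𝒜) (α : F' ⟶ F) (β : F ⟶ F'')
    (hw : ∀ i : I, α.app i ≫ β.app i = 0)
    (hse : ∀ i : I, (ShortComplex.mk (α.app i) (β.app i) (hw i)).ShortExact)
    (hmono : ∀ (i j : I) (h : i ≤ j), Mono (F''.map (homOfLE h))) :
    Function.Injective (limHomMap β W) ∧
    Function.Exact (limHomMap β W) (limHomMap α W) ∧
    Function.Surjective (limHomMap α W) := by
  refine ⟨?_, ?_, ?_⟩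
  · intro a b hab
    apply Subtype.ext
    funext i
    have : Epi (β.app i) := (hse i).epi_g
    have := congrFun (congrArg Subtype.val hab) i
    exact (cancel_epi (β.app i)).1 this
  · intro x
    constructor
    · intro hx
      have hx' : ∀ i, α.app i ≫ x.1 i = 0 := fun i => congrFun (congrArg Subtype.val hx) i
      have key : ∀ i, ∃ w : F''.obj i ⟶ W, β.app i ≫ w = x.1 i := fun i => by
        have : Epi (ShortComplex.mk (α.app i) (β.app i) (hw i)).g := (hse i).epi_g
        exact ⟨(hse i).exact.desc _ (hx' i), (hse i).exact.g_desc _ (hx' i)⟩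
      choose w hwx using key
      refine ⟨⟨w, fun i j h => ?_⟩, Subtype.ext (funext hwx)⟩
      have : Epi (β.app i) := (hse i).epi_g
      rw [← cancel_epi (β.app i), ← Category.assoc, ← β.naturality, Category.assoc, hwx, hwx,
        x.2 i j h]
    · rintro ⟨w, rfl⟩
      apply Subtype.ext
      funext i
      change α.app i ≫ β.app i ≫ w.1 i = 0
      rw [← Category.assoc, hw i, zero_comp]
  · intro y
    rcases isEmpty_or_nonempty I with hI | hI
    · exact ⟨0, Subtype.ext (funext fun i => (hI.false i).elim)⟩
    obtain ⟨s, hs, hcof⟩ := exists_cofinal_seq (I := I)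
    have step := step_lift W F' F F'' α β hw hse hmono y
    have : Mono (α.app (s 0)) := (hse (s 0)).mono_f
    let x : ∀ n, {x : F.obj (s n) ⟶ W // α.app (s n) ≫ x = y.1 (s n)} := fun n =>
      Nat.rec ⟨Injective.factorThru (y.1 (s 0)) (α.app (s 0)), Injective.comp_factorThru _ _⟩
        (fun n p => ⟨(step (s n) (s (n+1)) (hs n.le_succ) p.1 p.2).choose,
          (step (s n) (s (n+1)) (hs n.le_succ) p.1 p.2).choose_spec.1⟩) n
    have hx1 : ∀ n, F.map (homOfLE (hs n.le_succ)) ≫ (x (n+1)).1 = (x n).1 := fun n =>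
      (step (s n) (s (n+1)) (hs n.le_succ) (x n).1 (x n).2).choose_spec.2
    have hx2 : ∀ m n (h : m ≤ n), F.map (homOfLE (hs h)) ≫ (x n).1 = (x m).1 := by
      intro m n h
      induction n, h using Nat.le_induction with
      | base => 
        have : homOfLE (hs (le_refl m)) = 𝟙 (s m) := Subsingleton.elim _ _
        rw [this, F.map_id, Category.id_comp]
      | succ n h ih =>
        rw [← ih, ← hx1 n, ← Category.assoc, ← F.map_comp]
        rfl
    have hx3 : ∀ i m n (hm : i ≤ s m) (hn : i ≤ s n),
        F.map (homOfLE hm) ≫ (x m).1 = F.map (homOfLE hn) ≫ (x n).1 := by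
      have aux : ∀ i m n (hm : i ≤ s m) (hn : i ≤ s n), m ≤ n →
          F.map (homOfLE hm) ≫ (x m).1 = F.map (homOfLE hn) ≫ (x n).1 := by
        intro i m n hm hn h
        rw [← hx2 m n h, ← Category.assoc, ← F.map_comp]
        rfl
      intro i m n hm hn
      rcases le_total m n with h | h
      · exact aux i m n hm hn h
      · exact (aux i n m hn hm h).symm
    choose N hN using hcof
    refine ⟨⟨fun i => F.map (homOfLE (hN i)) ≫ (x (N i)).1, fun i j h => ?_⟩,
      Subtype.ext (funext fun i => ?_)⟩
    · beta_reduce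
      rw [hx3 i (N i) (N j) (hN i) (h.trans (hN j)), ← Category.assoc, ← F.map_comp]
      rfl
    · change α.app i ≫ F.map (homOfLE (hN i)) ≫ (x (N i)).1 = y.1 i
      rw [← Category.assoc, ← α.naturality, Category.assoc, (x (N i)).2, y.2 _ _ (hN i)]
end

section
/- Let k be a field, V a k-vector space, and S a nonempty family of k-subspaces of V such that: (i) for all W₁, W₂ ∈ S there exists W₃ ∈ S with W₃ ⊆ W₁ ∩ W₂; (ii) the quotient V/W is finite-dimensional for every W ∈ S; (iii) the canonical linear map from V to the inverse limit of the system (V/W)_{W ∈ S} is bijective. Let V^∨ denote the subspace of the algebraic dual of V consisting of those linear forms f : V → k that vanish on some W ∈ S. Then the evaluation map V → (V^∨)*, sending v to the linear form f ↦ f(v) on V^∨, is a linear isomorphism. -/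
universe u v

variable (k : Type u) (V : Type v) [Field k] [AddCommGroup V] [Module k V]

/-- The inverse limit of the quotients `V ⧸ W` over `W ∈ S`, with the canonical projections
`V ⧸ W′ → V ⧸ W` for `W′ ≤ W` as transition maps. -/
def invLimQuot (S : Set (Submodule k V)) : Type _ :=
  {x : (W : S) → V ⧸ (W : Submodule k V) //
    ∀ (W W' : S) (h : (W' : Submodule k V) ≤ (W : Submodule k V)),
      Submodule.mapQ (W' : Submodule k V) (W : Submodule k V) LinearMap.id
        (by simpa using h) (x W') = x W}

/-- The canonical map from `V` to the inverse limit of the quotients `V ⧸ W`, `W ∈ S`. -/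
def toInvLimQuot (S : Set (Submodule k V)) : V → invLimQuot k V S :=
  fun v => ⟨fun W => Submodule.Quotient.mk v, fun W W' h => by
    simp [Submodule.mapQ_apply]⟩

/-- let `S` be a nonempty, downward-directed family of subspaces of `V` with
finite-dimensional quotients, such that `V` is the inverse limit of the `V ⧸ W`, `W ∈ S`.
Let `V^∨` be the subspace of the dual of `V` of forms vanishing on some `W ∈ S` (realized as
`⨆ W ∈ S, dualAnnihilator W`, whose carrier is exactly this set).  Then the evaluation map
`V → (V^∨)*` is a linear isomorphism. -/
theorem statement10 (S : Set (Submodule k V)) (hne : S.Nonempty)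
    (hdir : ∀ W₁ ∈ S, ∀ W₂ ∈ S, ∃ W₃ ∈ S, W₃ ≤ W₁ ⊓ W₂)
    (hfin : ∀ W ∈ S, FiniteDimensional k (V ⧸ W))
    (hlim : Function.Bijective (toInvLimQuot k V S)) :
    (∀ f : Module.Dual k V,
      f ∈ ⨆ W ∈ S, Submodule.dualAnnihilator W ↔ ∃ W ∈ S, ∀ v ∈ W, f v = 0) ∧
    Function.Bijective
      ⇑((⨆ W ∈ S, Submodule.dualAnnihilator W).subtype.dualMap ∘ₗ Module.Dual.eval k V) := by
  have hmem : ∀ f : Module.Dual k V,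
      f ∈ ⨆ W ∈ S, Submodule.dualAnnihilator W ↔ ∃ W ∈ S, ∀ v ∈ W, f v = 0 := by
    intro f
    have : Nonempty S := hne.to_subtype
    rw [iSup_subtype', Submodule.mem_iSup_of_directed]
    · simp only [Submodule.mem_dualAnnihilator, Subtype.exists, exists_prop]
    · rintro ⟨W₁, h₁⟩ ⟨W₂, h₂⟩
      obtain ⟨W₃, h₃, hle⟩ := hdir W₁ h₁ W₂ h₂
      exact ⟨⟨W₃, h₃⟩, Submodule.dualAnnihilator_anti (hle.trans inf_le_left),
        Submodule.dualAnnihilator_anti (hle.trans inf_le_right)⟩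
  refine ⟨hmem, ?_⟩
  generalize (⨆ W ∈ S, Submodule.dualAnnihilator W) = D at hmem ⊢
  have hD : ∀ (W : S) (g : Module.Dual k (V ⧸ (W : Submodule k V))),
      (Submodule.mkQ (W : Submodule k V)).dualMap g ∈ D := by
    intro W g
    rw [hmem]
    refine ⟨W, W.2, fun v hv => ?_⟩
    rw [LinearMap.dualMap_apply, Submodule.mkQ_apply,
      (Submodule.Quotient.mk_eq_zero _).2 hv, map_zero]
  constructor
  · rw [injective_iff_map_eq_zero]
    intro v hv
    apply hlim.1
    apply Subtype.ext
    funext W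
    change (Submodule.Quotient.mk v : V ⧸ (W : Submodule k V)) = Submodule.Quotient.mk 0
    rw [Submodule.Quotient.mk_zero]
    refine (Module.forall_dual_apply_eq_zero_iff k _).1 fun g => ?_
    exact LinearMap.congr_fun hv ⟨_, hD W g⟩
  · intro φ
    have hx : ∀ W : S, ∃ x : V ⧸ (W : Submodule k V),
        ∀ g : Module.Dual k (V ⧸ (W : Submodule k V)), g x = φ ⟨_, hD W g⟩ := by
      intro W
      have := hfin W W.2
      obtain ⟨x, hx⟩ := (Module.evalEquiv k (V ⧸ (W : Submodule k V))).surjective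
        (φ ∘ₗ LinearMap.codRestrict D (Submodule.mkQ (W : Submodule k V)).dualMap (hD W))
      exact ⟨x, fun g => LinearMap.congr_fun hx g⟩
    choose x hx using hx
    obtain ⟨v, hv⟩ := hlim.2 ⟨x, by
      intro W W' h
      rw [← sub_eq_zero]
      refine (Module.forall_dual_apply_eq_zero_iff k _).1 fun g => ?_
      rw [map_sub, sub_eq_zero, hx W g]
      refine (hx W' (g ∘ₗ Submodule.mapQ _ _ LinearMap.id _)).trans ?_
      congr 1⟩
    refine ⟨v, LinearMap.ext fun f => ?_⟩
    obtain ⟨W, hW, hf⟩ := (hmem f).1 f.2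
    have h1 : (Submodule.Quotient.mk v : V ⧸ W) = x ⟨W, hW⟩ :=
      congrFun (congrArg Subtype.val hv) ⟨W, hW⟩
    have h2 := hx ⟨W, hW⟩ (W.liftQ f.1 hf)
    rw [← h1] at h2
    refine Eq.trans h2 ?_
    congr 1
end
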